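/- Let A ∈ ℂ^{n×n} be Hermitian positive definite with smallest eigenvalue λ_min and largest eigenvalue λ_max, let b ∈ ℂ^n with ‖b‖ = 1, let f be a Stieltjes function, and let m ≥ 1. Let V_m = [v_1 | … | v_m] ∈ ℂ^{n×m} be a Lanczos basis for K_m(A,b), set β_{m+1} := ‖A v_m − V_m (V_m* A V_m) e_m^{(m)}‖, and let f_m := V_m f(V_m* A V_m) V_m* b. Then for every x ∈ K_m(A,b), ‖f(A)b − f_m‖ ≤ (1 + β_{m+1} λ_max/λ_min²) ‖f(A)b − x‖. -/

import Mathlib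

open MeasureTheory Matrix ComplexOrder

/-- A Stieltjes function: `f z = ∫ 1/(z+t) dμ(t)` for `z > 0`, for a positive Borel
measure `μ` on `[0,∞)` with `∫ 1/(1+t) dμ(t) < ∞`. -/
def IsStieltjes (f : ℝ → ℝ) : Prop :=
  ∃ μ : Measure ℝ,
    MeasureTheory.IntegrableOn (fun t => (1 + t)⁻¹) (Set.Ici 0) μ ∧
    ∀ z : ℝ, 0 < z → f z = ∫ t in Set.Ici (0 : ℝ), (z + t)⁻¹ ∂μ

/-- The Krylov subspace `K_m(A,b) = span{b, Ab, …, A^{m-1} b}`. -/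
noncomputable def Krylov {n : ℕ} (A : Matrix (Fin n) (Fin n) ℂ)
    (b : EuclideanSpace ℂ (Fin n)) (m : ℕ) : Submodule ℂ (EuclideanSpace ℂ (Fin n)) :=
  Submodule.span ℂ {v | ∃ i < m, v = Matrix.toEuclideanLin (A ^ i) b}

section EuclideanLin

variable {ι κ : Type*} [Fintype ι] [DecidableEq ι] [Fintype κ] [DecidableEq κ]

theorem Matrix.inner_toEuclideanLin_conjTranspose (V : Matrix ι κ ℂ) (x : EuclideanSpace ℂ κ)
    (y : EuclideanSpace ℂ ι) :
    inner ℂ x (toEuclideanLin Vᴴ y) = inner ℂ (toEuclideanLin V x) y := by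
  rw [toEuclideanLin_conjTranspose_eq_adjoint, LinearMap.adjoint_inner_right]

theorem Matrix.toEuclideanLin_mul_apply {o : Type*} [Fintype o] [DecidableEq o]
    (M : Matrix o ι ℂ) (N : Matrix ι κ ℂ) (x : EuclideanSpace ℂ κ) :
    toEuclideanLin (M * N) x = toEuclideanLin M (toEuclideanLin N x) := by
  rw [← LinearMap.comp_apply, ← toLpLin_mul_same]

theorem Matrix.norm_toEuclideanLin_of_isometry {V : Matrix ι κ ℂ} (hV : Vᴴ * V = 1)
    (y : EuclideanSpace ℂ κ) :
    ‖toEuclideanLin V y‖ = ‖y‖ := by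
  rw [@norm_eq_sqrt_re_inner ℂ, @norm_eq_sqrt_re_inner ℂ _ _ _ _ y,
    ← inner_toEuclideanLin_conjTranspose, ← toEuclideanLin_mul_apply, hV]
  simp

end EuclideanLin

namespace Matrix.IsHermitian

variable {ι : Type*} [Fintype ι] [DecidableEq ι] {H : Matrix ι ι ℂ}

theorem toEuclideanLin_cfc_eigenvectorBasis (hH : H.IsHermitian) (φ : ℝ → ℝ) (i : ι) :
    toEuclideanLin (hH.cfc φ) (hH.eigenvectorBasis i) =
      (φ (hH.eigenvalues i) : ℂ) • hH.eigenvectorBasis i := by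
  rw [toLpLin_apply, IsHermitian.cfc, Unitary.conjStarAlgAut_apply,
    ← mulVec_mulVec, ← mulVec_mulVec, star_eigenvectorUnitary_mulVec, diagonal_mulVec_single,
    mul_one, ← mul_one ((RCLike.ofReal ∘ φ ∘ hH.eigenvalues) i), ← smul_eq_mul, Pi.single_smul',
    mulVec_smul, eigenvectorUnitary_mulVec]
  rfl

/-- Spectral expansion of the sesquilinear form of `φ(H)`. -/
theorem inner_cfc_eq_sum (hH : H.IsHermitian) (φ : ℝ → ℝ) (u w : EuclideanSpace ℂ ι) :
    inner ℂ u (toEuclideanLin (hH.cfc φ) w) =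
      ∑ i, (φ (hH.eigenvalues i) : ℂ) *
        (inner ℂ u (hH.eigenvectorBasis i) * inner ℂ (hH.eigenvectorBasis i) w) := by
  conv_lhs => rw [← hH.eigenvectorBasis.sum_repr' w]
  simp only [map_sum, map_smul, toEuclideanLin_cfc_eigenvectorBasis, inner_sum, inner_smul_right]
  exact Finset.sum_congr rfl fun i _ => by ring

theorem add_smul_one_mul_cfc_inv (hH : H.IsHermitian) (t : ℝ)
    (ht : ∀ i, hH.eigenvalues i + t ≠ 0) :
    (H + (t : ℂ) • 1) * hH.cfc (fun z => (z + t)⁻¹) = 1 := by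
  have h : H + (t : ℂ) • 1 = Unitary.conjStarAlgAut ℂ _ hH.eigenvectorUnitary
      (diagonal fun i => ((hH.eigenvalues i + t : ℝ) : ℂ)) := by
    conv_lhs => rw [hH.spectral_theorem]
    rw [← map_one (Unitary.conjStarAlgAut ℂ (Matrix ι ι ℂ) hH.eigenvectorUnitary), ← map_smul,
      ← map_add, ← diagonal_one, ← diagonal_smul, diagonal_add]
    simp
  rw [h, IsHermitian.cfc, ← map_mul, diagonal_mul_diagonal]
  convert map_one (Unitary.conjStarAlgAut ℂ (Matrix ι ι ℂ) hH.eigenvectorUnitary)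
  rw [← diagonal_one]
  congr 1
  ext i
  have := ht i
  change ((hH.eigenvalues i + t : ℝ) : ℂ) * ((hH.eigenvalues i + t)⁻¹ : ℝ) = 1
  rw [← Complex.ofReal_mul, mul_inv_cancel₀ this, Complex.ofReal_one]

theorem norm_inner_cfc_le (hH : H.IsHermitian) {φ : ℝ → ℝ} {c : ℝ}
    (hφ : ∀ i, |φ (hH.eigenvalues i)| ≤ c) (hc : 0 ≤ c) (u w : EuclideanSpace ℂ ι) :
    ‖inner ℂ u (toEuclideanLin (hH.cfc φ) w)‖ ≤ c * (‖u‖ * ‖w‖) := by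
  rw [inner_cfc_eq_sum]
  calc _ ≤ ∑ i, c * (‖inner ℂ u (hH.eigenvectorBasis i)‖ *
        ‖inner ℂ (hH.eigenvectorBasis i) w‖) := by
        refine (norm_sum_le _ _).trans (Finset.sum_le_sum fun i _ => ?_)
        rw [norm_mul, norm_mul, Complex.norm_real, Real.norm_eq_abs]
        gcongr
        exact hφ i
    _ ≤ c * (‖u‖ * ‖w‖) := by
        rw [← Finset.mul_sum]
        gcongr
        refine (Real.sum_mul_le_sqrt_mul_sqrt _ _ _).trans_eq ?_
        rw [hH.eigenvectorBasis.sum_sq_norm_inner_left, hH.eigenvectorBasis.sum_sq_norm_inner_right,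
          Real.sqrt_sq (norm_nonneg _), Real.sqrt_sq (norm_nonneg _)]

theorem inner_self_cfc (hH : H.IsHermitian) (φ : ℝ → ℝ) (u : EuclideanSpace ℂ ι) :
    inner ℂ u (toEuclideanLin (hH.cfc φ) u) =
      ((∑ i, φ (hH.eigenvalues i) * ‖inner ℂ (hH.eigenvectorBasis i) u‖ ^ 2 : ℝ) : ℂ) := by
  rw [inner_cfc_eq_sum]
  push_cast
  refine Finset.sum_congr rfl fun i _ => ?_
  rw [← inner_conj_symm u, Complex.conj_mul']

theorem cfc_id_eq (hH : H.IsHermitian) : hH.cfc id = H := by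
  conv_rhs => rw [hH.spectral_theorem]
  rfl

theorem mul_norm_sq_le_re_inner (hH : H.IsHermitian) {c : ℝ} (hc : ∀ i, c ≤ hH.eigenvalues i)
    (u : EuclideanSpace ℂ ι) : c * ‖u‖ ^ 2 ≤ (inner ℂ u (toEuclideanLin H u)).re := by
  have h := hH.inner_self_cfc id u
  rw [cfc_id_eq] at h
  rw [h, Complex.ofReal_re, ← hH.eigenvectorBasis.sum_sq_norm_inner_right, Finset.mul_sum]
  gcongr with i
  exact hc i

theorem toEuclideanLin_eigenvectorBasis (hH : H.IsHermitian) (i : ι) :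
    toEuclideanLin H (hH.eigenvectorBasis i) =
      (hH.eigenvalues i : ℂ) • hH.eigenvectorBasis i := by
  have h := hH.toEuclideanLin_cfc_eigenvectorBasis id i
  rwa [cfc_id_eq] at h

/-- Compression by an isometry does not decrease the lower spectral bound. -/
theorem le_eigenvalues_compression {κ : Type*} [Fintype κ] [DecidableEq κ] (hH : H.IsHermitian)
    {c : ℝ} (hc : ∀ i, c ≤ hH.eigenvalues i) {V : Matrix ι κ ℂ} (hV : Vᴴ * V = 1)
    (hT : (Vᴴ * H * V).IsHermitian) (i : κ) : c ≤ hT.eigenvalues i := by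
  set e := hT.eigenvectorBasis i
  have h1 : ‖e‖ = 1 := hT.eigenvectorBasis.orthonormal.1 i
  have h2 := hH.mul_norm_sq_le_re_inner hc (toEuclideanLin V e)
  rw [norm_toEuclideanLin_of_isometry hV, ← inner_toEuclideanLin_conjTranspose,
    ← toEuclideanLin_mul_apply, ← toEuclideanLin_mul_apply, hT.toEuclideanLin_eigenvectorBasis i,
    inner_smul_right, inner_self_eq_norm_sq_to_K, h1] at h2
  simpa using h2

end Matrix.IsHermitian

theorem integrableOn_inv_add_of_pos {μ : Measure ℝ}
    (hμ : IntegrableOn (fun t => (1 + t)⁻¹) (Set.Ici 0) μ) {z : ℝ} (hz : 0 < z) :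
    IntegrableOn (fun t => (z + t)⁻¹) (Set.Ici 0) μ := by
  refine (hμ.const_mul (1 + z⁻¹)).mono' (by fun_prop) ?_
  filter_upwards [ae_restrict_mem measurableSet_Ici] with t ht
  have ht : 0 ≤ t := ht
  have h1 : 0 < z + t := by positivity
  rw [Real.norm_of_nonneg (by positivity), ← div_eq_mul_inv, le_div_iff₀ (by positivity),
    inv_mul_le_iff₀ h1]
  field_simp
  nlinarith [mul_nonneg hz.le ht, mul_pos hz hz]

/-- The integral representation of a Stieltjes function passes to `f(H)`. -/
theorem Matrix.IsHermitian.inner_cfc_stieltjes {ι : Type*} [Fintype ι] [DecidableEq ι]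
    {H : Matrix ι ι ℂ} (hH : H.IsHermitian) (hpos : ∀ i, 0 < hH.eigenvalues i)
    {f : ℝ → ℝ} {μ : Measure ℝ} (hμ : IntegrableOn (fun t => (1 + t)⁻¹) (Set.Ici 0) μ)
    (hf : ∀ z : ℝ, 0 < z → f z = ∫ t in Set.Ici (0 : ℝ), (z + t)⁻¹ ∂μ)
    (u w : EuclideanSpace ℂ ι) :
    IntegrableOn (fun t => inner ℂ u (toEuclideanLin (hH.cfc fun z => (z + t)⁻¹) w))
      (Set.Ici 0) μ ∧
    inner ℂ u (toEuclideanLin (hH.cfc f) w) =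
      ∫ t in Set.Ici (0 : ℝ), inner ℂ u (toEuclideanLin (hH.cfc fun z => (z + t)⁻¹) w) ∂μ := by
  simp only [inner_cfc_eq_sum]
  have hint : ∀ i ∈ Finset.univ, IntegrableOn (fun t => ((hH.eigenvalues i + t)⁻¹ : ℝ) *
      (inner ℂ u (hH.eigenvectorBasis i) * inner ℂ (hH.eigenvectorBasis i) w)) (Set.Ici 0) μ :=
    fun i _ => (integrableOn_inv_add_of_pos hμ (hpos i)).ofReal.mul_const _
  refine ⟨integrable_finsetSum _ hint, ?_⟩
  rw [integral_finsetSum _ hint]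
  refine Finset.sum_congr rfl fun i _ => ?_
  rw [integral_mul_const, hf _ (hpos i), integral_complex_ofReal]

theorem Matrix.pow_apply_zero_of_hessenberg {m : ℕ} {T : Matrix (Fin m) (Fin m) ℂ}
    (hT : ∀ i k : Fin m, (k : ℕ) + 1 < i → T i k = 0) (h0 : 0 < m) (j : ℕ) (i : Fin m)
    (hij : j < i) : (T ^ j) i ⟨0, h0⟩ = 0 := by
  induction j generalizing i with
  | zero => exact one_apply_ne fun h => by simp [h] at hij
  | succ j ih =>
    rw [pow_succ', mul_apply]
    refine Finset.sum_eq_zero fun k _ => ?_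
    by_cases hk : j < k
    · rw [ih k hk, mul_zero]
    · rw [hT i k (by omega), zero_mul]

open Polynomial in
/-- The bottom-left entry of the resolvent of a Hermitian Hessenberg matrix is a fixed complex
number times a positive factor. -/
theorem Matrix.IsHermitian.exists_resolvent_corner_eq {m : ℕ} (hm : 1 ≤ m)
    {T : Matrix (Fin m) (Fin m) ℂ} (hT : T.IsHermitian) {l : Fin m} (hl : (l : ℕ) = m - 1)
    (hess : ∀ i k : Fin m, (k : ℕ) + 1 < i → T i k = 0) :
    ∃ c : ℂ, ∀ t : ℝ, (∀ i, 0 < hT.eigenvalues i + t) → ∃ p : ℝ, 0 < p ∧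
      hT.cfc (fun z => (z + t)⁻¹) l ⟨0, hm⟩ = c * p := by
  refine ⟨(-1) ^ (m - 1) * (T ^ (m - 1)) l ⟨0, hm⟩, fun t ht =>
    ⟨(∏ i, (hT.eigenvalues i + t))⁻¹, inv_pos.2 (Finset.prod_pos fun i _ => ht i), ?_⟩⟩
  have hP : (∏ i, (hT.eigenvalues i + t)) ≠ 0 := (Finset.prod_pos fun i _ => ht i).ne'
  set P := ∏ i, (hT.eigenvalues i + t) with hPdef
  set R := hT.cfc fun z => (z + t)⁻¹
  have hR : R * (T + (t : ℂ) • 1) = 1 :=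
    mul_eq_one_comm.1 (hT.add_smul_one_mul_cfc_inv t fun i => (ht i).ne')
  set q : ℂ[X] := T.charpoly /ₘ (X - C (-(t : ℂ)))
  have hdeg : T.charpoly.natDegree = m := by simp [charpoly_natDegree_eq_dim]
  have hqdeg : q.natDegree = m - 1 := by
    rw [natDegree_divByMonic _ (monic_X_sub_C _), hdeg, natDegree_X_sub_C]
  have hqlead : q.coeff (m - 1) = 1 := by
    rw [← hqdeg, coeff_natDegree, leadingCoeff_divByMonic_X_sub_C, (charpoly_monic T).leadingCoeff]
    rw [degree_eq_natDegree (charpoly_monic T).ne_zero, hdeg]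
    exact_mod_cast (by omega : m ≠ 0)
  have heval : T.charpoly.eval (-(t : ℂ)) = (-1) ^ m * P := by
    rw [hT.charpoly_eq, eval_prod, hPdef]
    push_cast
    simp only [eval_sub, eval_X, eval_C]
    calc _ = ∏ i, (-1 : ℂ) * (hT.eigenvalues i + t) :=
          Finset.prod_congr rfl fun i _ => by simp; ring
      _ = _ := by rw [Finset.prod_mul_distrib]; simp
  have hq : (T + (t : ℂ) • 1) * aeval T q = -((-1) ^ m * (P : ℂ)) • 1 := by
    have h := congrArg (aeval T) (X_sub_C_mul_divByMonic_eq_sub_modByMonic T.charpoly (-(t : ℂ)))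
    rw [modByMonic_X_sub_C_eq_C_eval, heval, map_sub, aeval_self_charpoly, map_mul] at h
    rw [map_sub, aeval_X, aeval_C, aeval_C, map_neg, sub_neg_eq_add, zero_sub,
      Algebra.algebraMap_eq_smul_one, Algebra.algebraMap_eq_smul_one] at h
    rw [neg_smul]
    exact h
  have hqR : aeval T q = -((-1) ^ m * (P : ℂ)) • R := by
    calc aeval T q = R * ((T + (t : ℂ) • 1) * aeval T q) := by
          rw [← Matrix.mul_assoc, hR, Matrix.one_mul]
      _ = _ := by rw [hq, Matrix.mul_smul, Matrix.mul_one]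
  have hqe : aeval T q l ⟨0, hm⟩ = (T ^ (m - 1)) l ⟨0, hm⟩ := by
    rw [aeval_eq_sum_range, hqdeg, Finset.sum_range_succ, hqlead, one_smul, add_apply, sum_apply,
      Finset.sum_eq_zero, zero_add]
    intro j hj
    rw [smul_apply, pow_apply_zero_of_hessenberg hess hm j l (hl ▸ Finset.mem_range.1 hj), smul_zero]
  rw [← hqe, hqR, smul_apply, smul_eq_mul]
  obtain ⟨k, rfl⟩ : ∃ k, m = k + 1 := ⟨m - 1, by omega⟩
  have hP' : (P : ℂ) ≠ 0 := by exact_mod_cast hP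
  push_cast
  field_simp
  have h1 : ((-1 : ℂ) ^ k) * (-1) ^ k = 1 := by rw [← mul_pow]; simp
  simp only [pow_succ]
  linear_combination (-(R l ⟨0, hm⟩)) * h1

theorem integral_norm_le_norm_integral_of_phase {α : Type*} [MeasurableSpace α] {ν : Measure α}
    {g : α → ℂ} (c : ℂ) (hg : ∀ᵐ t ∂ν, ∃ s : ℝ, 0 ≤ s ∧ g t = c * s) :
    ∫ t, ‖g t‖ ∂ν ≤ ‖∫ t, g t ∂ν‖ := by
  have h : ∫ t, (‖g t‖ : ℂ) ∂ν = (∫ t, g t ∂ν) * (‖c‖ / c) := by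
    rw [← integral_mul_const]
    refine integral_congr_ae ?_
    filter_upwards [hg] with t ht
    obtain ⟨s, hs, hst⟩ := ht
    rcases eq_or_ne c 0 with rfl | hc
    · simp [hst]
    · rw [hst, norm_mul, Complex.norm_of_nonneg hs]
      push_cast
      field_simp
  rw [integral_complex_ofReal] at h
  calc ∫ t, ‖g t‖ ∂ν = ‖((∫ t, ‖g t‖ ∂ν : ℝ) : ℂ)‖ :=
        (Complex.norm_of_nonneg (integral_nonneg fun _ => norm_nonneg _)).symm
    _ = ‖∫ t, g t ∂ν‖ * (‖c‖ / ‖c‖) := by rw [h]; simp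
    _ ≤ ‖∫ t, g t ∂ν‖ := mul_le_of_le_one_right (norm_nonneg _) (div_self_le_one _)

theorem Matrix.conjTranspose_residual {ι κ : Type*} [Fintype ι] [Fintype κ]
    {A : Matrix ι ι ℂ} {V : Matrix ι κ ℂ} (hA : A.IsHermitian) :
    (A * V - V * (Vᴴ * A * V))ᴴ = Vᴴ * A - Vᴴ * A * V * Vᴴ := by
  simp [Matrix.mul_assoc, hA.eq]

theorem Matrix.conjTranspose_residual_mul {ι κ : Type*} [Fintype ι] [Fintype κ]
    [DecidableEq κ] {A : Matrix ι ι ℂ} {V : Matrix ι κ ℂ} (hA : A.IsHermitian)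
    (hV : Vᴴ * V = 1) :
    (A * V - V * (Vᴴ * A * V))ᴴ * V = 0 := by
  rw [conjTranspose_residual hA, Matrix.sub_mul, Matrix.mul_assoc _ Vᴴ, hV, Matrix.mul_one,
    sub_self]

section Compression

variable {ι κ : Type*} [Fintype ι] [DecidableEq ι] [Fintype κ] [DecidableEq κ]

variable {A : Matrix ι ι ℂ} {V : Matrix ι κ ℂ}

variable {RA : Matrix ι ι ℂ} {RT : Matrix κ κ ℂ} {t : ℂ}

theorem Matrix.resolvent_compression_sub (hA : A.IsHermitian)
    (hRA : (A + t • 1) * RA = 1) (hRT : RT * (Vᴴ * A * V + t • 1) = 1) :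
    Vᴴ * RA - RT * Vᴴ = -(RT * (A * V - V * (Vᴴ * A * V))ᴴ * RA) := by
  have h : Vᴴ * (A + t • 1) = (Vᴴ * A * V + t • 1) * Vᴴ + (A * V - V * (Vᴴ * A * V))ᴴ := by
    rw [conjTranspose_residual hA, Matrix.mul_add, Matrix.add_mul]
    simp only [Matrix.mul_smul, Matrix.smul_mul, Matrix.mul_one, Matrix.one_mul]
    abel
  have h2 : RT * Vᴴ = Vᴴ * RA + RT * (A * V - V * (Vᴴ * A * V))ᴴ * RA := by
    calc RT * Vᴴ = RT * (Vᴴ * (A + t • 1)) * RA := by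
          rw [Matrix.mul_assoc, Matrix.mul_assoc Vᴴ, hRA, Matrix.mul_one]
      _ = _ := by
          rw [h, Matrix.mul_add, ← Matrix.mul_assoc RT, hRT, Matrix.one_mul, Matrix.add_mul]
  rw [h2]
  abel

theorem Matrix.residual_resolvent_mul (hA : A.IsHermitian) (hV : Vᴴ * V = 1)
    (hRA : RA * (A + t • 1) = 1) (hRT : (Vᴴ * A * V + t • 1) * RT = 1) :
    (A * V - V * (Vᴴ * A * V))ᴴ * RA * V =
      -((A * V - V * (Vᴴ * A * V))ᴴ * RA * (A * V - V * (Vᴴ * A * V)) * RT) := by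
  set E := A * V - V * (Vᴴ * A * V) with hE
  have h : (A + t • 1) * V = V * (Vᴴ * A * V + t • 1) + E := by
    rw [hE, Matrix.mul_add, Matrix.add_mul]
    simp only [Matrix.mul_smul, Matrix.smul_mul, Matrix.mul_one, Matrix.one_mul]
    abel
  have h2 : V * RT = RA * V + RA * E * RT := by
    calc V * RT = RA * ((A + t • 1) * V) * RT := by
          rw [← Matrix.mul_assoc, hRA, Matrix.one_mul]
      _ = _ := by
          rw [h, Matrix.mul_add, Matrix.add_mul, Matrix.mul_assoc RA (V * _), Matrix.mul_assoc V,
            hRT, Matrix.mul_one]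
  have h3 : Eᴴ * (V * RT) = 0 := by
    rw [← Matrix.mul_assoc, conjTranspose_residual_mul hA hV, Matrix.zero_mul]
  rw [h2, Matrix.mul_add] at h3
  simpa only [Matrix.mul_assoc] using eq_neg_of_add_eq_zero_left h3

/-- If the residual of the compression `T = V* A V` is supported on the column `l` and the entry
`(l, o)` of the resolvent of `T` has constant phase, the error of the compressed functional
calculus is controlled by the component of `f(A)b` along the residual. -/
theorem Matrix.norm_compression_cfc_sub_le (hA : A.IsHermitian) (hV : Vᴴ * V = 1)
    {lmin : ℝ} (hpos : 0 < lmin) (hlmin : ∀ i, lmin ≤ hA.eigenvalues i)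
    (hT : (Vᴴ * A * V).IsHermitian) {l o : κ} {r : EuclideanSpace ℂ ι}
    (hr : ∀ w : EuclideanSpace ℂ κ,
      toEuclideanLin (A * V - V * (Vᴴ * A * V)) w = w l • r)
    (hcorner : ∃ c : ℂ, ∀ t : ℝ, (∀ i, 0 < hT.eigenvalues i + t) → ∃ p : ℝ, 0 < p ∧
      hT.cfc (fun z => (z + t)⁻¹) l o = c * p)
    {f : ℝ → ℝ} (hf : IsStieltjes f) :
    ‖toEuclideanLin Vᴴ (toEuclideanLin (hA.cfc f)
        (toEuclideanLin V (EuclideanSpace.single o 1))) -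
      toEuclideanLin (hT.cfc f) (EuclideanSpace.single o 1)‖ ≤
    lmin⁻¹ * ‖inner ℂ r (toEuclideanLin (hA.cfc f)
      (toEuclideanLin V (EuclideanSpace.single o 1)))‖ := by
  obtain ⟨μ, hμ, hfμ⟩ := hf
  obtain ⟨c, hc⟩ := hcorner
  have hTmin : ∀ i, lmin ≤ hT.eigenvalues i := hA.le_eigenvalues_compression hlmin hV hT
  have hApos : ∀ i, 0 < hA.eigenvalues i := fun i => hpos.trans_le (hlmin i)
  have hTpos : ∀ i, 0 < hT.eigenvalues i := fun i => hpos.trans_le (hTmin i)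
  set e : EuclideanSpace ℂ κ := EuclideanSpace.single o 1 with he
  set b := toEuclideanLin V e with hb
  set RA : ℝ → Matrix ι ι ℂ := fun t => hA.cfc fun z => (z + t)⁻¹ with hRA
  set RT : ℝ → Matrix κ κ ℂ := fun t => hT.cfc fun z => (z + t)⁻¹ with hRT
  set E := A * V - V * (Vᴴ * A * V) with hE
  have hEadj : ∀ y, toEuclideanLin Eᴴ y = inner ℂ r y • EuclideanSpace.single l (1 : ℂ) := by
    intro y
    refine ext_inner_left ℂ fun x => ?_
    rw [inner_toEuclideanLin_conjTranspose, hr, inner_smul_left, inner_smul_right,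
      EuclideanSpace.inner_single_right]
    simp [mul_comm]
  have hA1 : ∀ t : ℝ, 0 ≤ t → (A + (t : ℂ) • 1) * RA t = 1 := fun t ht =>
    hA.add_smul_one_mul_cfc_inv t fun i => (add_pos_of_pos_of_nonneg (hApos i) ht).ne'
  have hT1 : ∀ t : ℝ, 0 ≤ t → (Vᴴ * A * V + (t : ℂ) • 1) * RT t = 1 := fun t ht =>
    hT.add_smul_one_mul_cfc_inv t fun i => (add_pos_of_pos_of_nonneg (hTpos i) ht).ne'
  set g : ℝ → ℂ := fun t => inner ℂ r (toEuclideanLin (RA t) b) with hg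
  have hphase : ∀ t : ℝ, 0 ≤ t → ∃ s : ℝ, 0 ≤ s ∧ g t = -c * s := by
    intro t ht
    obtain ⟨p, hp, hpc⟩ := hc t fun i => add_pos_of_pos_of_nonneg (hTpos i) ht
    have h := congrArg (fun M => (toEuclideanLin M e) l)
      (residual_resolvent_mul hA hV (mul_eq_one_comm.1 (hA1 t ht)) (hT1 t ht))
    have hcol : (toEuclideanLin (RT t) e) l = c * p := by
      rw [← hpc]
      simp [he, hRT]
    simp only [map_neg, LinearMap.neg_apply, toEuclideanLin_mul_apply, ← hE, hEadj, hr,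
      hcol, map_smul, hRA, hA.inner_self_cfc] at h
    refine ⟨p * ∑ i, (hA.eigenvalues i + t)⁻¹ * ‖inner ℂ (hA.eigenvectorBasis i) r‖ ^ 2,
      mul_nonneg hp.le (Finset.sum_nonneg fun i _ => mul_nonneg
        (inv_nonneg.2 (add_nonneg (hApos i).le ht)) (sq_nonneg _)), ?_⟩
    simp only [PiLp.smul_apply, PiLp.neg_apply, PiLp.single_apply, if_true, smul_eq_mul,
      mul_one] at h
    rw [hg]
    simp only [hb, hRA]
    rw [h]
    push_cast
    ring
  set d := toEuclideanLin Vᴴ (toEuclideanLin (hA.cfc f) b) - toEuclideanLin (hT.cfc f) e with hd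
  obtain ⟨hgi, hgint⟩ := hA.inner_cfc_stieltjes hApos hμ hfμ r b
  obtain ⟨h1i, h1⟩ := hA.inner_cfc_stieltjes hApos hμ hfμ (toEuclideanLin V d) b
  obtain ⟨h2i, h2⟩ := hT.inner_cfc_stieltjes hTpos hμ hfμ d e
  have hdd : inner ℂ d d = ∫ t in Set.Ici (0 : ℝ),
      -(inner ℂ d (toEuclideanLin (RT t) (EuclideanSpace.single l 1)) * g t) ∂μ := by
    conv_lhs => rw [hd, inner_sub_right, ← hd, inner_toEuclideanLin_conjTranspose, h1, h2,
      ← integral_sub h1i h2i]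
    refine setIntegral_congr_fun measurableSet_Ici fun t ht => ?_
    have h := congrArg (fun M => inner ℂ d (toEuclideanLin M b))
      (resolvent_compression_sub hA (hA1 t ht) (mul_eq_one_comm.1 (hT1 t ht)))
    have hVb : toEuclideanLin Vᴴ b = e := by
      rw [hb, ← toEuclideanLin_mul_apply, hV]
      simp
    simp only [map_sub, map_neg, LinearMap.neg_apply, LinearMap.sub_apply,
      toEuclideanLin_mul_apply, hVb, ← hE, hEadj, map_smul, inner_smul_right, inner_sub_right,
      inner_neg_right, inner_toEuclideanLin_conjTranspose V d] at h
    rw [mul_comm]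
    exact h
  have hbound : ‖d‖ * ‖d‖ ≤ ‖d‖ * (lmin⁻¹ * ‖inner ℂ r (toEuclideanLin (hA.cfc f) b)‖) := by
    calc ‖d‖ * ‖d‖ = ‖inner ℂ d d‖ := by
          rw [inner_self_eq_norm_sq_to_K]
          simp [sq]
      _ ≤ ∫ t in Set.Ici (0 : ℝ), (lmin⁻¹ * ‖d‖) * ‖g t‖ ∂μ := by
          rw [hdd]
          refine norm_integral_le_of_norm_le (hgi.norm.const_mul _) ?_
          filter_upwards [ae_restrict_mem measurableSet_Ici] with t ht
          have ht : 0 ≤ t := ht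
          rw [norm_neg, norm_mul]
          gcongr
          refine (hT.norm_inner_cfc_le (c := lmin⁻¹) (fun i => ?_) (by positivity) _ _).trans_eq
            (by simp)
          have h3 : lmin ≤ hT.eigenvalues i + t := by linarith [hTmin i]
          rw [abs_of_nonneg (inv_nonneg.2 (hpos.le.trans h3))]
          gcongr
      _ = (lmin⁻¹ * ‖d‖) * ∫ t in Set.Ici (0 : ℝ), ‖g t‖ ∂μ := integral_const_mul _ _
      _ ≤ (lmin⁻¹ * ‖d‖) * ‖∫ t in Set.Ici (0 : ℝ), g t ∂μ‖ := by
          gcongr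
          refine integral_norm_le_norm_integral_of_phase (-c) ?_
          filter_upwards [ae_restrict_mem measurableSet_Ici] with t ht using hphase t ht
      _ = _ := by rw [hgint]; ring
  rcases (norm_nonneg d).eq_or_lt with h0 | h0
  · rw [← h0]
    positivity
  · exact le_of_mul_le_mul_left hbound h0

theorem Matrix.norm_sub_projection_le (hV : Vᴴ * V = 1) (y : EuclideanSpace ℂ ι) :
    ‖y - toEuclideanLin V (toEuclideanLin Vᴴ y)‖ ≤ ‖y‖ := by
  have h : inner ℂ (toEuclideanLin V (toEuclideanLin Vᴴ y))
      (y - toEuclideanLin V (toEuclideanLin Vᴴ y)) = 0 := by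
    rw [← inner_toEuclideanLin_conjTranspose, map_sub, ← toEuclideanLin_mul_apply Vᴴ V, hV]
    simp
  have h2 := norm_add_sq_eq_norm_sq_add_norm_sq_of_inner_eq_zero _ _ h
  rw [add_sub_cancel] at h2
  nlinarith [norm_nonneg y, norm_nonneg (y - toEuclideanLin V (toEuclideanLin Vᴴ y)),
    mul_self_nonneg ‖toEuclideanLin V (toEuclideanLin Vᴴ y)‖]

end Compression

theorem toEuclideanLin_mem_krylov_succ {n : ℕ} {A : Matrix (Fin n) (Fin n) ℂ}
    {b : EuclideanSpace ℂ (Fin n)} {j : ℕ} {v : EuclideanSpace ℂ (Fin n)}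
    (hv : v ∈ Krylov A b j) : toEuclideanLin A v ∈ Krylov A b (j + 1) := by
  have h : Krylov A b j ≤ (Krylov A b (j + 1)).comap (toEuclideanLin A) := by
    refine Submodule.span_le.2 ?_
    rintro _ ⟨i, hi, rfl⟩
    refine Submodule.subset_span ⟨i + 1, by omega, ?_⟩
    rw [pow_succ', toEuclideanLin_mul_apply]
  exact h hv

/-- **Near instance optimality of Lanczos for Stieltjes functions**
(Theorem 3.1, bound (3.1)): for a Lanczos basis `V = [v₁ | … | v_m]` of `K_m(A,b)`
(orthonormal columns, `v₁ = b`, nested Krylov spans) and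
`β_{m+1} = ‖A v_m − V (V* A V) e_m‖`, the Lanczos approximation
`f_m = V f(V* A V) V* b` satisfies
`‖f(A)b − f_m‖ ≤ (1 + β_{m+1} λ_max/λ_min²) ‖f(A)b − x‖` for every `x ∈ K_m(A,b)`. -/
theorem lanczos_near_instance_optimality_stieltjes_beta
    {n m : ℕ} (hm : 1 ≤ m)
    (A : Matrix (Fin n) (Fin n) ℂ) (hA : A.IsHermitian) (hApd : A.PosDef)
    (lmin lmax : ℝ)
    (hlmin_mem : ∃ i, hA.eigenvalues i = lmin) (hlmin : ∀ i, lmin ≤ hA.eigenvalues i)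
    (hlmax_mem : ∃ i, hA.eigenvalues i = lmax) (hlmax : ∀ i, hA.eigenvalues i ≤ lmax)
    (b : EuclideanSpace ℂ (Fin n)) (hb : ‖b‖ = 1)
    (f : ℝ → ℝ) (hf : IsStieltjes f)
    (V : Matrix (Fin n) (Fin m) ℂ)
    -- the columns of `V` are orthonormal
    (hVorth : Vᴴ * V = 1)
    -- the first column of `V` is `b`
    (hVfirst : Matrix.toEuclideanLin V (EuclideanSpace.single ⟨0, hm⟩ 1) = b)
    -- for every `1 ≤ j ≤ m`, the first `j` columns of `V` span `K_j(A,b)`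
    (hVnested : ∀ j : ℕ, 1 ≤ j → j ≤ m →
      Submodule.span ℂ {v | ∃ i : Fin m, (i : ℕ) < j ∧
        v = Matrix.toEuclideanLin V (EuclideanSpace.single i 1)} = Krylov A b j)
    -- `β_{m+1} = ‖A v_m − V (V* A V) e_m‖`
    (β : ℝ)
    (hβ : β = ‖Matrix.toEuclideanLin A
        (Matrix.toEuclideanLin V (EuclideanSpace.single ⟨m - 1, by omega⟩ 1)) -
      Matrix.toEuclideanLin V
        (Matrix.toEuclideanLin (Vᴴ * A * V) (EuclideanSpace.single ⟨m - 1, by omega⟩ 1))‖)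
    (fm : EuclideanSpace ℂ (Fin n))
    (hfm : fm = Matrix.toEuclideanLin V
      (Matrix.toEuclideanLin ((Matrix.isHermitian_conjTranspose_mul_mul V hA).cfc f)
        (Matrix.toEuclideanLin Vᴴ b)))
    (x : EuclideanSpace ℂ (Fin n)) (hx : x ∈ Krylov A b m) :
    ‖Matrix.toEuclideanLin (hA.cfc f) b - fm‖ ≤
      (1 + β * lmax / lmin ^ 2) * ‖Matrix.toEuclideanLin (hA.cfc f) b - x‖ := by
  set T := Vᴴ * A * V with hTdef
  set hT : T.IsHermitian := Matrix.isHermitian_conjTranspose_mul_mul V hA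
  set l : Fin m := ⟨m - 1, by omega⟩ with hl
  set E := A * V - V * T with hE
  set v : Fin m → EuclideanSpace ℂ (Fin n) := fun k =>
    toEuclideanLin V (EuclideanSpace.single k 1) with hv
  have hlpos : 0 < lmin := by
    obtain ⟨i, rfl⟩ := hlmin_mem
    exact hApd.eigenvalues_pos i
  have hlle : lmin ≤ lmax := by
    obtain ⟨i, rfl⟩ := hlmin_mem
    exact hlmax i
  have hVV : ∀ z, toEuclideanLin Vᴴ (toEuclideanLin V z) = z := fun z => by
    rw [← toEuclideanLin_mul_apply, hVorth]
    simp
  have hspan : ∀ j, Submodule.span ℂ {w | ∃ i : Fin m, (i : ℕ) < j ∧ w = v i} ≤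
      LinearMap.range (toEuclideanLin V) := fun j => by
    refine Submodule.span_le.2 ?_
    rintro _ ⟨i, -, rfl⟩
    exact ⟨_, rfl⟩
  have hstep : ∀ k : Fin m, (k : ℕ) + 1 < m → toEuclideanLin A (v k) ∈
      Submodule.span ℂ {w | ∃ i : Fin m, (i : ℕ) < k + 2 ∧ w = v i} := fun k hk => by
    rw [hVnested (k + 2) (by omega) (by omega)]
    refine toEuclideanLin_mem_krylov_succ (j := k + 1) ?_
    rw [← hVnested (k + 1) (by omega) (by omega)]
    exact Submodule.subset_span ⟨k, by omega, rfl⟩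
  have hess : ∀ i k : Fin m, (k : ℕ) + 1 < i → T i k = 0 := by
    intro i k hik
    have hentry : T i k = inner ℂ (v i) (toEuclideanLin A (v k)) := by
      rw [hv, ← inner_toEuclideanLin_conjTranspose, ← toEuclideanLin_mul_apply,
        ← toEuclideanLin_mul_apply, ← hTdef, EuclideanSpace.inner_single_left]
      simp
    have hle : Submodule.span ℂ {w | ∃ j : Fin m, (j : ℕ) < k + 2 ∧ w = v j} ≤
        LinearMap.ker (innerSL ℂ (v i)).toLinearMap := by
      refine Submodule.span_le.2 ?_
      rintro _ ⟨j, hj, rfl⟩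
      have hne : i ≠ j := fun h => by
        subst h
        omega
      change inner ℂ (v i) (v j) = 0
      rw [hv, ← inner_toEuclideanLin_conjTranspose, hVV, EuclideanSpace.inner_single_left]
      simp [hne]
    rw [hentry]
    exact hle (hstep k (by omega))
  have hcol : ∀ k, k ≠ l → toEuclideanLin E (EuclideanSpace.single k 1) = 0 := by
    intro k hk
    have hk' : (k : ℕ) ≠ m - 1 := fun h => hk (Fin.ext h)
    obtain ⟨z, hz⟩ := hspan _ (hstep k (by omega))
    rw [hE, map_sub, LinearMap.sub_apply, hTdef, Matrix.mul_assoc]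
    simp only [toEuclideanLin_mul_apply]
    change toEuclideanLin A (v k) -
      toEuclideanLin V (toEuclideanLin Vᴴ (toEuclideanLin A (v k))) = 0
    rw [← hz, hVV, sub_self]
  have hr : ∀ w : EuclideanSpace ℂ (Fin m), toEuclideanLin E w =
      w l • toEuclideanLin E (EuclideanSpace.single l 1) := by
    intro w
    have hw : w = ∑ k, w k • EuclideanSpace.single k (1 : ℂ) := by
      simpa using ((EuclideanSpace.basisFun (Fin m) ℂ).sum_repr w).symm
    conv_lhs => rw [hw]
    rw [map_sum, Finset.sum_eq_single l]
    · rw [map_smul]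
    · intro k _ hk
      rw [map_smul, hcol k hk, smul_zero]
    · simp
  have hβE : β = ‖toEuclideanLin E (EuclideanSpace.single l 1)‖ := by
    rw [hβ, hE, map_sub, LinearMap.sub_apply, toEuclideanLin_mul_apply A V,
      toEuclideanLin_mul_apply V T]
  have hmain := norm_compression_cfc_sub_le hA hVorth hlpos hlmin hT hr
    (hT.exists_resolvent_corner_eq hm rfl hess) hf
  rw [hVfirst] at hmain
  set y := toEuclideanLin (hA.cfc f) b with hy
  set r := toEuclideanLin E (EuclideanSpace.single l 1)
  obtain ⟨z, rfl⟩ : x ∈ LinearMap.range (toEuclideanLin V) := by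
    rw [← hVnested m hm le_rfl] at hx
    exact hspan _ hx
  have hrz : inner ℂ r y = inner ℂ r (y - toEuclideanLin V z) := by
    have h0 : inner ℂ r (toEuclideanLin V z) = 0 := by
      rw [← inner_toEuclideanLin_conjTranspose, ← toEuclideanLin_mul_apply,
        conjTranspose_residual_mul hA hVorth]
      simp
    rw [inner_sub_right, h0, sub_zero]
  have hfm' : fm = toEuclideanLin V (toEuclideanLin (hT.cfc f)
      (EuclideanSpace.single ⟨0, hm⟩ 1)) := by
    rw [hfm, ← hVfirst, hVV]
  have hβ0 : 0 ≤ β := hβE ▸ norm_nonneg _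
  set δ := ‖y - toEuclideanLin V z‖
  have hproj : ‖y - toEuclideanLin V (toEuclideanLin Vᴴ y)‖ ≤ δ := by
    have h := norm_sub_projection_le hVorth (y - toEuclideanLin V z)
    rwa [map_sub, map_sub, hVV, sub_sub_sub_cancel_right] at h
  calc ‖y - fm‖ = ‖(y - toEuclideanLin V (toEuclideanLin Vᴴ y)) +
        toEuclideanLin V (toEuclideanLin Vᴴ y - toEuclideanLin (hT.cfc f)
          (EuclideanSpace.single ⟨0, hm⟩ 1))‖ := by
        rw [hfm', map_sub, sub_add_sub_cancel]
    _ ≤ δ + lmin⁻¹ * (β * δ) := by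
        refine (norm_add_le _ _).trans (add_le_add hproj ?_)
        rw [norm_toEuclideanLin_of_isometry hVorth]
        refine hmain.trans ?_
        rw [hrz, hβE]
        gcongr
        exact norm_inner_le_norm _ _
    _ = (1 + β * lmin / lmin ^ 2) * δ := by
        field_simp
    _ ≤ (1 + β * lmax / lmin ^ 2) * δ := by
        gcongr
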